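/- Let G be a group acting by homeomorphisms on a topological space X. Suppose there exist nonempty open subsets A ⊆ Y ⊆ X and elements a, a₀, a₁, a₂, a₃, a₄ ∈ G such that Y = A ∪ a • A, the sets a₀ • A, a₁ • A, a₂ • A, a₃ • A, a₄ • A are pairwise disjoint, and Y is invariant under a and under each aᵢ (i = 0, …, 4). Let F be the subgroup of G generated by f₁ = a₁ a a₂⁻¹ and f₂ = a₃ a a₄⁻¹. Then the set Z = F • (a₀ • A) = ⋃_{h ∈ F} h • (a₀ • A) is a nonempty open F-invariant subset of X, and F acts properly discontinuously on Z: for every z ∈ Z there is an open neighborhood U ⊆ Z of z such that (h • U) ∩ U = ∅ for all h ∈ F with h ≠ 1. -/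

import Mathlib

open Pointwise

/-!
Since `Y ⊆ A ∪ a • A` and `a • Y = Y`, both `a` and `a⁻¹` carry `Y \ A` into `A`. Hence
`p * a * q⁻¹` carries `Y \ q • A` into `p • A`, and its inverse carries `Y \ p • A` into `q • A`:
the generators of `F` play ping-pong inside `Y` on the disjoint sets `a1 • A`, ..., `a4 • A`. A
nonempty reduced word moves the fifth set `a0 • A` into one of those four, hence off itself. So the
translates of `a0 • A` by distinct elements of `F` are disjoint, and they serve as the required
neighborhoods.
-/

section PingPong

open scoped Function

variable {G X ι : Type*} [Group G] [MulAction G X]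

/-- Ping-pong dynamics inside `Y` for a family `g` of group elements: `T (i, true)` attracts `g i`
and `T (i, false)` attracts `(g i)⁻¹`, as in the letters of `FreeGroup ι`. In contrast to the usual
ping-pong conditions, nothing is required of points outside `Y`. -/
structure IsPingPongTable (g : ι → G) (T : ι × Bool → Set X) (Y : Set X) : Prop where
  subset : ∀ s, T s ⊆ Y
  pairwise_disjoint : Pairwise (Disjoint on T)
  smul_sdiff_subset : ∀ i, g i • (Y \ T (i, false)) ⊆ T (i, true)
  inv_smul_sdiff_subset : ∀ i, (g i)⁻¹ • (Y \ T (i, true)) ⊆ T (i, false)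

namespace IsPingPongTable

variable {g : ι → G} {T : ι × Bool → Set X} {Y B : Set X}

theorem lift_mk_singleton_smul_sdiff_subset (hT : IsPingPongTable g T Y) (s : ι × Bool) :
    FreeGroup.lift g (FreeGroup.mk [s]) • (Y \ T (s.1, !s.2)) ⊆ T s := by
  obtain ⟨i, _ | _⟩ := s
  · simpa using hT.inv_smul_sdiff_subset i
  · simpa using hT.smul_sdiff_subset i

theorem lift_mk_cons_smul_subset (hT : IsPingPongTable g T Y) (hBY : B ⊆ Y)
    (hBT : ∀ s, Disjoint B (T s)) {s : ι × Bool} {L : List (ι × Bool)}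
    (hL : FreeGroup.IsReduced (s :: L)) :
    FreeGroup.lift g (FreeGroup.mk (s :: L)) • B ⊆ T s := by
  induction L generalizing s with
  | nil =>
    exact (Set.smul_set_mono (Set.subset_sdiff.2 ⟨hBY, hBT _⟩)).trans
      (hT.lift_mk_singleton_smul_sdiff_subset s)
  | cons t L ih =>
    obtain ⟨hst, htL⟩ := FreeGroup.isReduced_cons_cons.1 hL
    have t_ne : t ≠ (s.1, !s.2) := by
      rintro rfl
      simp at hst
    have tail_subset : FreeGroup.lift g (FreeGroup.mk (t :: L)) • B ⊆ Y \ T (s.1, !s.2) :=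
      (ih htL).trans (Set.subset_sdiff.2 ⟨hT.subset t, hT.pairwise_disjoint t_ne⟩)
    rw [← List.singleton_append, ← FreeGroup.mul_mk, map_mul, mul_smul]
    exact (Set.smul_set_mono tail_subset).trans (hT.lift_mk_singleton_smul_sdiff_subset s)

theorem disjoint_lift_smul (hT : IsPingPongTable g T Y) (hBY : B ⊆ Y)
    (hBT : ∀ s, Disjoint B (T s)) {w : FreeGroup ι} (hw : w ≠ 1) :
    Disjoint (FreeGroup.lift g w • B) B := by
  classical
  obtain ⟨s, L, hsL⟩ := List.exists_cons_of_ne_nil (mt FreeGroup.toWord_eq_nil_iff.1 hw)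
  have hL : FreeGroup.IsReduced (s :: L) := hsL ▸ FreeGroup.isReduced_toWord
  rw [← FreeGroup.mk_toWord (x := w), hsL]
  exact (hBT s).symm.mono_left (hT.lift_mk_cons_smul_subset hBY hBT hL)

theorem pairwiseDisjoint_closure_smul (hT : IsPingPongTable g T Y) (hBY : B ⊆ Y)
    (hBT : ∀ s, Disjoint B (T s)) :
    (Subgroup.closure (Set.range g) : Set G).PairwiseDisjoint (· • B) := by
  rw [← FreeGroup.range_lift_eq_closure]
  rintro _ ⟨v, rfl⟩ _ ⟨w, rfl⟩ hvw
  have hwv : w⁻¹ * v ≠ 1 := fun h ↦ hvw (by rw [inv_mul_eq_one.1 h])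
  simpa [Function.onFun, Set.disjoint_smul_set_right, smul_smul] using
    hT.disjoint_lift_smul hBY hBT hwv

end IsPingPongTable

variable {A Y : Set X} {a : G}

theorem smul_sdiff_subset_of_subset_union_smul (hY : Y ⊆ A ∪ a • A) (ha : a • Y = Y) :
    a • (Y \ A) ⊆ A := by
  rw [Set.smul_set_sdiff, ha, Set.sdiff_subset_iff, Set.union_comm]
  exact hY

theorem inv_smul_sdiff_subset_of_subset_union_smul (hY : Y ⊆ A ∪ a • A) : a⁻¹ • (Y \ A) ⊆ A := by
  rw [Set.smul_set_subset_iff_subset_inv_smul_set, inv_inv, Set.sdiff_subset_iff]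
  exact hY

theorem mul_mul_inv_smul_sdiff_subset (h : a • (Y \ A) ⊆ A) (p : G) {q : G} (hq : q • Y = Y) :
    (p * a * q⁻¹) • (Y \ q • A) ⊆ p • A := by
  calc (p * a * q⁻¹) • (Y \ q • A)
    _ = (p * a * q⁻¹) • q • (Y \ A) := by rw [Set.smul_set_sdiff (a := q), hq]
    _ = p • a • (Y \ A) := by simp only [smul_smul, inv_mul_cancel_right]
    _ ⊆ p • A := Set.smul_set_mono h

theorem isPingPongTable_smul (hAY : A ⊆ Y) (hY : Y ⊆ A ∪ a • A) (ha : a • Y = Y)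
    {c : ι × Bool → G} (hc : ∀ s, c s • Y = Y) (hdisj : Pairwise (Disjoint on fun s ↦ c s • A)) :
    IsPingPongTable (fun i ↦ c (i, true) * a * (c (i, false))⁻¹) (fun s ↦ c s • A) Y where
  subset s := (Set.smul_set_mono hAY).trans (hc s).subset
  pairwise_disjoint := hdisj
  smul_sdiff_subset i :=
    mul_mul_inv_smul_sdiff_subset (smul_sdiff_subset_of_subset_union_smul hY ha) _ (hc _)
  inv_smul_sdiff_subset i := by
    simpa [mul_assoc] using
      mul_mul_inv_smul_sdiff_subset (inv_smul_sdiff_subset_of_subset_union_smul hY)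
        (c (i, false)) (hc (i, true))

theorem pairwiseDisjoint_closure_pair_smul (hAY : A ⊆ Y) (hY : Y ⊆ A ∪ a • A) (ha : a • Y = Y)
    {p₁ q₁ p₂ q₂ : G} {B : Set X} (hBY : B ⊆ Y)
    (hinv : ∀ c ∈ [p₁, q₁, p₂, q₂], c • Y = Y)
    (hB : ∀ c ∈ [p₁, q₁, p₂, q₂], Disjoint B (c • A))
    (hdisj : [p₁, q₁, p₂, q₂].Pairwise fun c d ↦ Disjoint (c • A) (d • A)) :
    (Subgroup.closure {p₁ * a * q₁⁻¹, p₂ * a * q₂⁻¹} : Set G).PairwiseDisjoint (· • B) := by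
  let c : Bool × Bool → G
    | (false, true) => p₁
    | (false, false) => q₁
    | (true, true) => p₂
    | (true, false) => q₂
  have c_mem (s : Bool × Bool) : c s ∈ [p₁, q₁, p₂, q₂] := by
    rcases s with ⟨_ | _, _ | _⟩ <;> simp [c]
  have c_disjoint : Pairwise (Disjoint on fun s ↦ c s • A) := by
    simp only [List.pairwise_cons, List.forall_mem_cons] at hdisj
    rintro ⟨_ | _, _ | _⟩ ⟨_ | _, _ | _⟩ hst <;> simp_all [c, Function.onFun, disjoint_comm]
  have hT := isPingPongTable_smul hAY hY ha (fun s ↦ hinv _ (c_mem s)) c_disjoint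
  simpa only [Bool.range_eq] using
    hT.pairwiseDisjoint_closure_smul hBY fun s ↦ hB _ (c_mem s)

end PingPong

section Translates

variable {G X : Type*} [Group G] [TopologicalSpace X] [MulAction G X] [ContinuousConstSMul G X]

theorem exists_isOpen_smul_inter_eq_empty {F : Subgroup G} {B : Set X} (hB : IsOpen B)
    (hF : (F : Set G).PairwiseDisjoint (· • B)) {z : X} (hz : z ∈ (F : Set G) • B) :
    ∃ U ⊆ (F : Set G) • B, IsOpen U ∧ z ∈ U ∧ ∀ h ∈ F, h ≠ 1 → h • U ∩ U = ∅ := by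
  obtain ⟨k, hk, b, hb, rfl⟩ := hz
  refine ⟨k • B, Set.smul_set_subset_smul hk, hB.smul k, Set.smul_mem_smul_set hb, fun h hh h1 ↦ ?_⟩
  rw [← Set.disjoint_iff_inter_eq_empty, smul_smul]
  exact hF (F.mul_mem hh hk) hk (mul_eq_right.not.2 h1)

end Translates

theorem stmt_18 {G X : Type*} [Group G] [TopologicalSpace X] [MulAction G X]
    (hcont : ∀ g : G, Continuous fun x : X => g • x)
    (A Y : Set X) (hAne : A.Nonempty) (hAopen : IsOpen A) (hYopen : IsOpen Y)
    (hAY : A ⊆ Y)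
    (a a0 a1 a2 a3 a4 : G)
    (hY : Y = A ∪ a • A)
    (h01 : Disjoint (a0 • A) (a1 • A))
    (h02 : Disjoint (a0 • A) (a2 • A))
    (h03 : Disjoint (a0 • A) (a3 • A))
    (h04 : Disjoint (a0 • A) (a4 • A))
    (h12 : Disjoint (a1 • A) (a2 • A))
    (h13 : Disjoint (a1 • A) (a3 • A))
    (h14 : Disjoint (a1 • A) (a4 • A))
    (h23 : Disjoint (a2 • A) (a3 • A))
    (h24 : Disjoint (a2 • A) (a4 • A))
    (h34 : Disjoint (a3 • A) (a4 • A))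
    (ha : a • Y = Y) (ha0 : a0 • Y = Y) (ha1 : a1 • Y = Y)
    (ha2 : a2 • Y = Y) (ha3 : a3 • Y = Y) (ha4 : a4 • Y = Y)
    (F : Subgroup G) (hF : F = Subgroup.closure {a1 * a * a2⁻¹, a3 * a * a4⁻¹})
    (Z : Set X) (hZ : Z = ⋃ h ∈ (F : Set G), h • (a0 • A)) :
    Z.Nonempty ∧ IsOpen Z ∧ (∀ h ∈ F, h • Z = Z) ∧
    ∀ z ∈ Z, ∃ U, U ⊆ Z ∧ IsOpen U ∧ z ∈ U ∧
      ∀ h ∈ F, h ≠ 1 → (h • U) ∩ U = ∅ := by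
  have : ContinuousConstSMul G X := ⟨hcont⟩
  have hBopen : IsOpen (a0 • A) := hAopen.smul a0
  have hFdisj : (F : Set G).PairwiseDisjoint (· • a0 • A) := by
    rw [hF]
    exact pairwiseDisjoint_closure_pair_smul hAY hY.subset ha
      ((Set.smul_set_mono hAY).trans ha0.subset) (by simp [ha1, ha2, ha3, ha4])
      (by simp [h01, h02, h03, h04]) (by simp [h12, h13, h14, h23, h24, h34])
  rw [Set.iUnion_smul_set] at hZ
  subst hZ
  refine ⟨(OneMemClass.coe_nonempty F).smul hAne.smul_set, hBopen.smul_left, fun h hh ↦ ?_,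
    fun z hz ↦ exists_isOpen_smul_inter_eq_empty hBopen hFdisj hz⟩
  rw [← smul_assoc, smul_coe_set hh]
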